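/- arXiv:1710.04680 — 2 statements merged into one kernel-verified Lean document; each statement's English description precedes it below -/
import Mathlib

section
/- Let k ≥ 4 be an even integer and let n ≥ k + 2. Then there exist four permutations σ₁, σ₂, σ₃, σ₄ in the alternating group A_n, each of order exactly k, such that the subgroup they generate is all of A_n. -/
/-!
Let `σ` be the product of the `k`-cycle on `0, …, k - 1` and an odd number of disjoint
transpositions `(k k+1), (k+2 k+3), …`, as many as leave at most three points of `Fin n` fixed. It
is even and has order `k`, and so are its conjugates by `(1 2)` and by the translations by `1` and
`-3` of `Fin n`. Every step `x ↦ x + 1` is made by `σ` or one of its two translates: the translate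
by `1` joins consecutive transpositions, and the translate by `-3`, whose cycle passes through
`n - 3, n - 2, n - 1, 0`, joins the fixed points of `σ`. So the group generated by the four
permutations is transitive. The commutator of `σ⁻¹` and `(1 2)` is a three-cycle on `{0, 1, 2}`. A
block with two points, one of them in `{0, 1, 2}`, is preserved by this three-cycle, hence contains
`{0, 1, 2}`; each generator sends a point of `{0, 1, 2}` into `{0, 1, 2}`, hence preserves the
block. So the group is primitive, and Jordan's theorem applies.
-/

open Equiv Equiv.Perm MulAction
open scoped Pointwise

section Primitivity

variable {α : Type*} {S : Set (Perm α)} {B : Set α}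

lemma mem_stabilizer_of_isBlock {H : Subgroup (Perm α)} (hB : IsBlock H B) {g : Perm α}
    (hg : g ∈ H) {x : α} (hx : x ∈ B) (hgx : g x ∈ B) : g ∈ stabilizer (Perm α) B :=
  mem_stabilizer_iff.2 (hB.smul_eq_of_mem (g := ⟨g, hg⟩) hx hgx)

lemma eq_univ_of_subset_stabilizer [IsPretransitive (Subgroup.closure S) α]
    (hS : S ⊆ stabilizer (Perm α) B) (hB : B.Nonempty) : B = Set.univ := by
  obtain ⟨b, hb⟩ := hB
  refine Set.eq_univ_of_forall fun x ↦ ?_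
  obtain ⟨⟨g, hg⟩, rfl⟩ := exists_smul_eq (Subgroup.closure S) b x
  exact (mem_stabilizer_set.1 ((Subgroup.closure_le _).2 hS hg) b).2 hb

lemma mem_zpowers_zpow_of_prime_orderOf {G : Type*} [Group G] {g : G} (hg : (orderOf g).Prime)
    {i : ℤ} (hi : g ^ i ≠ 1) : g ∈ Subgroup.zpowers (g ^ i) := by
  have := Fact.mk hg
  obtain ⟨j, hj⟩ := mem_zpowers_of_prime_card (Nat.card_zpowers g)
    (g := ⟨g ^ i, i, rfl⟩) (g' := ⟨g, Subgroup.mem_zpowers g⟩) (by simpa [Subtype.ext_iff] using hi)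
  exact ⟨j, congrArg Subtype.val hj⟩

lemma mem_stabilizer_of_isBlock_of_isCycle {H : Subgroup (Perm α)} {t : Perm α} (htH : t ∈ H)
    (ht : t.IsCycle) (hp : (orderOf t).Prime) (hB : IsBlock H B) {x y : α} (hx : x ∈ B)
    (hy : y ∈ B) (hxy : x ≠ y) (htx : t x ≠ x) : t ∈ stabilizer (Perm α) B := by
  by_cases hty : t y = y
  · exact mem_stabilizer_of_isBlock hB htH hy (hty.symm ▸ hy)
  obtain ⟨i, rfl⟩ := ht.sameCycle htx hty
  have hi : t ^ i ≠ 1 := fun h ↦ hxy (by rw [h, one_apply])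
  have hti : t ^ i ∈ stabilizer (Perm α) B :=
    mem_stabilizer_of_isBlock hB (zpow_mem htH i) hx hy
  exact (Subgroup.zpowers_le.2 hti) (mem_zpowers_zpow_of_prime_orderOf hp hi)

lemma isPreprimitive_closure_of_isCycle [IsPretransitive (Subgroup.closure S) α] {t : Perm α}
    (htS : t ∈ Subgroup.closure S) (ht : t.IsCycle) (hp : (orderOf t).Prime)
    (hS : ∀ g ∈ S, ∃ x, t x ≠ x ∧ t (g x) ≠ g x) :
    IsPreprimitive (Subgroup.closure S) α := by
  have ⟨a, ha, _⟩ := ht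
  refine .of_isTrivialBlock_base a fun {B} haB hB ↦ or_iff_not_imp_left.2 fun hsub ↦ ?_
  obtain ⟨b, hb, hab⟩ := (Set.not_subsingleton_iff.1 hsub).exists_ne a
  have htB := mem_stabilizer_of_isBlock_of_isCycle htS ht hp hB haB hb hab.symm ha
  have hmoved {x : α} (hx : t x ≠ x) : x ∈ B := by
    obtain ⟨i, rfl⟩ := ht.sameCycle ha hx
    exact (mem_stabilizer_set.1 (zpow_mem htB i) a).2 haB
  refine eq_univ_of_subset_stabilizer (S := S) (fun g hg ↦ ?_) ⟨a, haB⟩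
  obtain ⟨x, hx, hgx⟩ := hS g hg
  exact mem_stabilizer_of_isBlock hB (Subgroup.subset_closure hg) (hmoved hx) (hmoved hgx)

end Primitivity

section Generators

lemma inv_mul_swap_conj {α : Type*} [DecidableEq α] {σ : Perm α} {a b c : α} (hab : σ a = b)
    (hbc : σ b = c) : σ⁻¹ * (swap b c * σ * (swap b c)⁻¹) = swap a b * swap b c := by
  have hconj : swap b c = σ * swap a b * σ⁻¹ := by rw [← swap_apply_apply, hab, hbc]
  calc σ⁻¹ * (swap b c * σ * (swap b c)⁻¹) = σ⁻¹ * swap b c * σ * swap b c := by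
        simp only [swap_inv, mul_assoc]
    _ = swap a b * swap b c := by nth_rw 1 [hconj]; group

lemma addRight_conj_apply {G : Type*} [AddGroup G] {σ : Perm G} (j x : G) :
    (Equiv.addRight j * σ * (Equiv.addRight j)⁻¹) x = σ (x - j) + j := by
  simp [sub_eq_add_neg]

lemma isPretransitive_closure_of_forall_add_one {n : ℕ} [NeZero n] {S : Set (Perm (Fin n))}
    (hS : ∀ x, ∃ g ∈ S, g x = x + 1) : IsPretransitive (Subgroup.closure S) (Fin n) := by
  obtain ⟨n, rfl⟩ := Nat.exists_eq_succ_of_ne_zero (NeZero.ne n)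
  refine (isPretransitive_iff_base 0).2 fun x ↦ ?_
  induction x using Fin.induction with
  | zero => exact ⟨1, one_smul _ _⟩
  | succ i ih =>
    obtain ⟨h, hh⟩ := ih
    obtain ⟨g, hg, hgi⟩ := hS i.castSucc
    refine ⟨⟨g, Subgroup.subset_closure hg⟩ * h, ?_⟩
    rw [mul_smul, hh, ← Fin.coeSucc_eq_succ, ← hgi]
    rfl

lemma alternatingGroup_le_closure_of_swap_conj_mem {α : Type*} [Fintype α] [DecidableEq α]
    {S : Set (Perm α)} [IsPretransitive (Subgroup.closure S) α] {σ : Perm α} {a b c : α}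
    (habc : [a, b, c].Nodup) (hab : σ a = b) (hbc : σ b = c) (hσ : σ ∈ S)
    (hconj : swap b c * σ * (swap b c)⁻¹ ∈ S)
    (hS : ∀ g ∈ S, ∃ x ∈ ({a, b, c} : Finset α), g x ∈ ({a, b, c} : Finset α)) :
    alternatingGroup α ≤ Subgroup.closure S := by
  have hmem : swap a b * swap b c ∈ Subgroup.closure S := by
    rw [← inv_mul_swap_conj hab hbc]
    exact mul_mem (inv_mem (Subgroup.subset_closure hσ)) (Subgroup.subset_closure hconj)
  have hthree : (swap a b * swap b c).IsThreeCycle := by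
    rw [swap_comm a b]
    apply isThreeCycle_swap_mul_swap_same <;> grind
  have hprime : (orderOf (swap a b * swap b c)).Prime := hthree.orderOf ▸ Nat.prime_three
  have hprim : IsPreprimitive (Subgroup.closure S) α := by
    refine isPreprimitive_closure_of_isCycle hmem hthree.isCycle hprime ?_
    simpa only [← mem_support, support_swap_mul_swap habc] using hS
  exact alternatingGroup_le_of_isPreprimitive_of_isThreeCycle_mem hprim hthree hmem

end Generators

section Numerals

variable {n m : ℕ} [NeZero n]

lemma val_ofNat_of_lt (hm : m < n) : (Fin.ofNat n m).val = m := Nat.mod_eq_of_lt hm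

lemma ne_ofNat_of_val_ne {x : Fin n} (hm : m < n) (hx : x.val ≠ m) : x ≠ Fin.ofNat n m :=
  fun h ↦ hx (by rw [h, val_ofNat_of_lt hm])

end Numerals

lemma closure_eq_top_of_le_closure_image {G : Type*} [Group G] {H : Subgroup G} {T : Set H}
    (hT : H ≤ Subgroup.closure ((↑) '' T : Set G)) : Subgroup.closure T = ⊤ := by
  refine Subgroup.map_injective H.subtype_injective (le_antisymm ?_ ?_)
  · exact Subgroup.map_mono le_top
  · rwa [MonoidHom.map_closure, ← MonoidHom.range_eq_map, Subgroup.range_subtype]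

section FourConjugates

variable {n : ℕ} [NeZero n] {σ : Perm (Fin n)}

/-- The generators of the alternating group: `σ` and its conjugates by the transposition `(1 2)`
and by the translations by `1` and by `-3` modulo `n`. -/
def fourConjugates (σ : Perm (Fin n)) : Set (Perm (Fin n)) :=
  {σ, swap 1 2 * σ * (swap 1 2)⁻¹, Equiv.addRight 1 * σ * (Equiv.addRight 1)⁻¹,
    Equiv.addRight (-3) * σ * (Equiv.addRight (-3))⁻¹}

lemma isPretransitive_closure_fourConjugates
    (hσ : ∀ x, σ x = x + 1 ∨ σ (x - 1) = x - 1 + 1 ∨ σ (x + 3) = x + 3 + 1) :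
    IsPretransitive (Subgroup.closure (fourConjugates σ)) (Fin n) := by
  refine isPretransitive_closure_of_forall_add_one fun x ↦ ?_
  rcases hσ x with h | h | h
  · exact ⟨σ, by simp [fourConjugates], h⟩
  · refine ⟨Equiv.addRight 1 * σ * (Equiv.addRight 1)⁻¹, by simp [fourConjugates], ?_⟩
    rw [addRight_conj_apply, h]
    abel
  · refine ⟨Equiv.addRight (-3) * σ * (Equiv.addRight (-3))⁻¹, by simp [fourConjugates], ?_⟩
    rw [addRight_conj_apply, sub_neg_eq_add, h]
    abel

open scoped Fin.CommRing in
lemma exists_mem_apply_mem_of_mem_fourConjugates (hn : 3 ≤ n) (h0 : σ 0 = 1) (h4 : σ 4 = 5)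
    {g : Perm (Fin n)} (hg : g ∈ fourConjugates σ) :
    ∃ x ∈ ({0, 1, 2} : Finset (Fin n)), g x ∈ ({0, 1, 2} : Finset (Fin n)) := by
  rcases hg with rfl | rfl | rfl | rfl
  · exact ⟨0, by simp, by simp [h0]⟩
  · have hfix : swap 1 2 (0 : Fin n) = 0 := swap_apply_of_ne_of_ne
      (ne_ofNat_of_val_ne (m := 1) (by omega) (by simp))
      (ne_ofNat_of_val_ne (m := 2) (by omega) (by simp))
    exact ⟨0, by simp, by simp [hfix, h0]⟩
  · refine ⟨1, by simp, ?_⟩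
    rw [addRight_conj_apply, sub_self, h0, one_add_one_eq_two]
    simp
  · refine ⟨1, by simp, ?_⟩
    rw [addRight_conj_apply, show (1 : Fin n) - -3 = 4 by ring, h4,
      show (5 : Fin n) + -3 = 2 by ring]
    simp

lemma alternatingGroup_le_closure_fourConjugates (hn : 3 ≤ n) (h0 : σ 0 = 1) (h1 : σ 1 = 2)
    (h4 : σ 4 = 5) (hσ : ∀ x, σ x = x + 1 ∨ σ (x - 1) = x - 1 + 1 ∨ σ (x + 3) = x + 3 + 1) :
    alternatingGroup (Fin n) ≤ Subgroup.closure (fourConjugates σ) := by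
  have htrans := isPretransitive_closure_fourConjugates hσ
  have hnodup : [(0 : Fin n), 1, 2].Nodup := by
    have h01 : (0 : Fin n) ≠ 1 := ne_ofNat_of_val_ne (m := 1) (by omega) (by simp)
    have h02 : (0 : Fin n) ≠ 2 := ne_ofNat_of_val_ne (m := 2) (by omega) (by simp)
    have h12 : (1 : Fin n) ≠ 2 := ne_ofNat_of_val_ne (m := 2) (by omega)
      ((val_ofNat_of_lt (m := 1) (by omega)).trans_ne (by simp))
    simp [h01, h02, h12]
  exact alternatingGroup_le_closure_of_swap_conj_mem hnodup h0 h1 (by simp [fourConjugates])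
    (by simp [fourConjugates]) fun _ ↦ exists_mem_apply_mem_of_mem_fourConjugates hn h0 h4

lemma closure_conjNormal_eq_top {σ : alternatingGroup (Fin n)}
    (hσ : alternatingGroup (Fin n) ≤ Subgroup.closure (fourConjugates (σ : Perm (Fin n)))) :
    Subgroup.closure {σ, MulAut.conjNormal (swap 1 2) σ, MulAut.conjNormal (Equiv.addRight 1) σ,
      MulAut.conjNormal (Equiv.addRight (-3)) σ} = ⊤ := by
  refine closure_eq_top_of_le_closure_image ?_
  simpa only [Set.image_insert_eq, Set.image_singleton, MulAut.conjNormal_apply,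
    fourConjugates] using hσ

end FourConjugates

/-- The product of the cycle `(0 1 … k-1)` and the `r` transpositions
`(k k+1), …, (k+2r-2 k+2r-1)`, as a permutation of `Fin n`. It has this meaning only if `0 < k` and
`k + 2 * r ≤ n`; otherwise the entries are reduced modulo `n` and the factors may overlap. -/
def cycleMulSwaps (n k : ℕ) [NeZero n] : ℕ → Perm (Fin n)
  | 0 => Fin.cycleRange (Fin.ofNat n (k - 1))
  | r + 1 => cycleMulSwaps n k r * swap (Fin.ofNat n (k + 2 * r)) (Fin.ofNat n (k + 2 * r + 1))

namespace cycleMulSwaps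

variable {n k r : ℕ} [NeZero n]

lemma apply_of_le (hk : 0 < k) {x : Fin n} (hx : k + 2 * r ≤ x) : cycleMulSwaps n k r x = x := by
  induction r with
  | zero =>
    refine Fin.cycleRange_of_gt (Fin.lt_def.2 ?_)
    rw [val_ofNat_of_lt] <;> omega
  | succ r ih =>
    rw [cycleMulSwaps, Perm.mul_apply, swap_apply_of_ne_of_ne, ih (by omega)] <;>
      apply ne_ofNat_of_val_ne <;> omega

lemma disjoint_swap (hk : 0 < k) (hn : k + 2 * r + 2 ≤ n) :
    (cycleMulSwaps n k r).Disjoint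
      (swap (Fin.ofNat n (k + 2 * r)) (Fin.ofNat n (k + 2 * r + 1))) := by
  intro x
  by_cases hx : k + 2 * r ≤ x
  · exact .inl (apply_of_le hk hx)
  · exact .inr (swap_apply_of_ne_of_ne (ne_ofNat_of_val_ne (by omega) (by omega))
      (ne_ofNat_of_val_ne (by omega) (by omega)))

lemma cycleType_eq (hk : 2 ≤ k) (hn : k + 2 * r ≤ n) :
    (cycleMulSwaps n k r).cycleType = k ::ₘ Multiset.replicate r 2 := by
  induction r with
  | zero =>
    have hval : (Fin.ofNat n (k - 1)).val = k - 1 := val_ofNat_of_lt (by omega)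
    have hne : Fin.ofNat n (k - 1) ≠ 0 :=
      ne_ofNat_of_val_ne (m := 0) (by omega) (by omega)
    rw [cycleMulSwaps, Fin.cycleType_cycleRange hne, hval, Nat.sub_add_cancel (by omega)]
    rfl
  | succ r ih =>
    have hval : (Fin.ofNat n (k + 2 * r)).val = k + 2 * r := val_ofNat_of_lt (by omega)
    have hne : Fin.ofNat n (k + 2 * r) ≠ Fin.ofNat n (k + 2 * r + 1) :=
      ne_ofNat_of_val_ne (by omega) (by omega)
    rw [cycleMulSwaps, (disjoint_swap (by omega) (by omega)).cycleType_mul, ih (by omega),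
      (isCycle_swap hne).cycleType, card_support_swap hne, Multiset.replicate_succ,
      Multiset.cons_add, Multiset.add_comm, Multiset.singleton_add]

lemma orderOf_eq (hk : 2 ≤ k) (hke : Even k) (hn : k + 2 * r ≤ n) :
    orderOf (cycleMulSwaps n k r) = k := by
  rw [← lcm_cycleType, cycleType_eq hk hn, Multiset.lcm_cons]
  exact Nat.lcm_eq_left (Multiset.lcm_dvd.2 fun m hm ↦
    Multiset.eq_of_mem_replicate hm ▸ hke.two_dvd)

lemma sign_eq_one (hk : 2 ≤ k) (hke : Even k) (hr : Odd r) (hn : k + 2 * r ≤ n) :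
    sign (cycleMulSwaps n k r) = 1 := by
  rw [sign_of_cycleType, cycleType_eq hk hn]
  refine Even.neg_one_pow ?_
  simp only [Multiset.sum_cons, Multiset.sum_replicate, Multiset.card_cons,
    Multiset.card_replicate, smul_eq_mul]
  grind

lemma apply_eq_add_one (hk : 0 < k) (hke : Even k) (hn : k + 2 * r ≤ n) {x : Fin n}
    (hx : x + 1 < k ∨ Even x.val ∧ x < k + 2 * r) : cycleMulSwaps n k r x = x + 1 := by
  induction r with
  | zero =>
    rw [cycleMulSwaps, Fin.cycleRange_of_lt]
    rw [Fin.lt_def, val_ofNat_of_lt] <;> grind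
  | succ r ih =>
    rw [cycleMulSwaps, Perm.mul_apply]
    by_cases hxr : x.val = k + 2 * r
    · have hx₀ : Fin.ofNat n (k + 2 * r) = x := by
        rw [← Fin.val_inj, val_ofNat_of_lt (by omega), hxr]
      have hx₁ : Fin.ofNat n (k + 2 * r + 1) = x + 1 := by
        rw [← Fin.val_inj, val_ofNat_of_lt (by omega), Fin.val_add_one_of_lt' (by omega), hxr]
      rw [hx₀, hx₁, swap_apply_left, apply_of_le hk]
      rw [Fin.val_add_one_of_lt' (by omega)]
      omega
    · rw [swap_apply_of_ne_of_ne, ih (by omega) (by grind)] <;>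
        apply ne_ofNat_of_val_ne <;> grind

lemma apply_eq_add_one_or (hk : 4 ≤ k) (hke : Even k) (hkr : k + 2 * r ≤ n)
    (hn : n ≤ k + 2 * r + 3) (x : Fin n) :
    cycleMulSwaps n k r x = x + 1 ∨ cycleMulSwaps n k r (x - 1) = x - 1 + 1 ∨
      cycleMulSwaps n k r (x + 3) = x + 3 + 1 := by
  have hstep {y : Fin n} (hy : y + 1 < k ∨ Even y.val ∧ y < k + 2 * r) :
      cycleMulSwaps n k r y = y + 1 := apply_eq_add_one (by omega) hke hkr hy
  by_cases hx : x + 1 < k ∨ Even x.val ∧ x < k + 2 * r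
  · exact .inl (hstep hx)
  by_cases hxn : x + 3 < n
  · have hval : (x - 1).val = x - 1 := Fin.val_sub_one_of_ne_zero (by grind)
    exact .inr (.inl (hstep (by grind)))
  · have hthree : (3 : Fin n).val = 3 := val_ofNat_of_lt (m := 3) (by omega)
    have hval : (x + 3).val = x + 3 - n := by
      rw [Fin.val_add_eq_ite, hthree, if_pos (by omega)]
    exact .inr (.inr (hstep (by omega)))

lemma apply_zero (hk : 2 ≤ k) (hke : Even k) (hn : k + 2 * r ≤ n) :
    cycleMulSwaps n k r 0 = 1 := by
  rw [apply_eq_add_one (by omega) hke hn (.inl (by simpa)), zero_add]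

open scoped Fin.CommRing in
lemma apply_one (hk : 4 ≤ k) (hke : Even k) (hn : k + 2 * r ≤ n) :
    cycleMulSwaps n k r 1 = 2 := by
  have hval : (1 : Fin n).val = 1 := val_ofNat_of_lt (m := 1) (by omega)
  rw [apply_eq_add_one (by omega) hke hn (.inl (by omega)), one_add_one_eq_two]

open scoped Fin.CommRing in
lemma apply_four (hk : 4 ≤ k) (hke : Even k) (hr : 0 < r) (hn : k + 2 * r ≤ n) :
    cycleMulSwaps n k r 4 = 5 := by
  have hval : (4 : Fin n).val = 4 := val_ofNat_of_lt (m := 4) (by omega)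
  rw [apply_eq_add_one (by omega) hke hn (.inr ⟨by rw [hval]; decide, by omega⟩)]
  ring

lemma alternatingGroup_le_closure (hk : 4 ≤ k) (hke : Even k) (hr : 0 < r) (hkr : k + 2 * r ≤ n)
    (hn : n ≤ k + 2 * r + 3) :
    alternatingGroup (Fin n) ≤ Subgroup.closure (fourConjugates (cycleMulSwaps n k r)) :=
  alternatingGroup_le_closure_fourConjugates (by omega) (apply_zero (by omega) hke hkr)
    (apply_one hk hke hkr) (apply_four hk hke hr hkr) (apply_eq_add_one_or hk hke hkr hn)

end cycleMulSwaps

/-- For any even `k ≥ 4` and `n ≥ k + 2`, the alternating group on `n` symbols is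
generated by four elements of order exactly `k`. -/
theorem alternating_group_generated_by_four_elements_of_even_order
    (k n : ℕ) (hk : 4 ≤ k) (hke : Even k) (hn : k + 2 ≤ n) :
    ∃ σ₁ σ₂ σ₃ σ₄ : alternatingGroup (Fin n),
      orderOf σ₁ = k ∧ orderOf σ₂ = k ∧ orderOf σ₃ = k ∧ orderOf σ₄ = k ∧
      Subgroup.closure {σ₁, σ₂, σ₃, σ₄} = ⊤ := by
  have : NeZero n := ⟨by omega⟩
  obtain ⟨r, hr, hrn, hnr⟩ : ∃ r, Odd r ∧ k + 2 * r ≤ n ∧ n ≤ k + 2 * r + 3 :=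
    ⟨2 * ((n - k - 2) / 4) + 1, by simp, by omega, by omega⟩
  obtain ⟨σ, hσ⟩ : ∃ σ : alternatingGroup (Fin n), (σ : Perm (Fin n)) = cycleMulSwaps n k r :=
    ⟨⟨_, mem_alternatingGroup.2 (cycleMulSwaps.sign_eq_one (by omega) hke hr hrn)⟩, rfl⟩
  have horder : orderOf σ = k := by
    rw [← Subgroup.orderOf_coe, hσ, cycleMulSwaps.orderOf_eq (by omega) hke hrn]
  have hconj (g : Perm (Fin n)) : orderOf (MulAut.conjNormal g σ) = k :=
    (MulEquiv.orderOf_eq _ σ).trans horder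
  exact ⟨σ, MulAut.conjNormal (swap 1 2) σ, MulAut.conjNormal (Equiv.addRight 1) σ,
    MulAut.conjNormal (Equiv.addRight (-3)) σ, horder, hconj _, hconj _, hconj _,
    closure_conjNormal_eq_top <| hσ ▸
      cycleMulSwaps.alternatingGroup_le_closure hk hke hr.pos hrn hnr⟩
end

section
/- Let k ≥ 5 and n ≥ 2(k − 1). Then there exist eight matrices M₁, …, M₈ in SL(n, ℤ), each of order exactly k, such that the subgroup they generate is all of SL(n, ℤ). -/
/-!
Five generators are enough. Write `n = m * k + r + 1` with `r < k` and let `A`, `B`, `C` be signed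
permutation matrices of permutations `α`, `β`, `γ` that rotate `m` consecutive blocks of length
`k` starting at `0`, `1` and `r + 1`. Each of them fixes a point, and putting the sign that
corrects the determinant there keeps the order equal to `k`. The other two generators are the
conjugates of `B` by the elementary matrices `T = E₀₁(1)` and `U = E₁₀(1)`.

Since `β 0 = 0` and `β 1 = 2`, the commutators `⁅T, B⁆ = E₀₁(1) E₀₂(±1)` and
`⁅U, B⁆ = E₁₀(1) E₂₀(±1)` are generated. Conjugating the first by `A` moves it to row `1`, and
its commutator with the second is then the elementary matrix `E₁₀(±1)`. The relation "all
elementary matrices at `(i, j)` are generated" is a preorder on the indices, by the commutator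
formula, and it is invariant under `α`, `β`, `γ`; going round the cycle of `α` through `0` gives
`E₀₁` from `E₁₀`. So the equivalence class of `0` is closed under `α`, and it is closed under `β`
and `γ` because they fix `0`. As each index is sent to the next one by one of the three
permutations, all indices are equivalent, and column reduction finishes the proof.
-/

open Matrix Matrix.SpecialLinearGroup Equiv
open scoped commutatorElement

section Transvections

variable {ι R : Type*} [Fintype ι] [DecidableEq ι] [CommRing R]

theorem specialLinearGroup_ext_smul {g h : SpecialLinearGroup ι R}
    (hgh : ∀ v : ι → R, g • v = h • v) : g = h :=
  toLin'_injective (LinearEquiv.ext hgh)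

theorem smul_single_one_apply (g : SpecialLinearGroup ι R) (i j : ι) :
    (g • (Pi.single j 1 : ι → R)) i = g i j := by
  simp [Matrix.SpecialLinearGroup.smul_def]

theorem transvection_smul {i j : ι} (hij : i ≠ j) (x : R) (v : ι → R) :
    transvection hij x • v = Function.update v i (v i + x * v j) := by
  ext l
  rcases eq_or_ne l i with rfl | hl <;>
    simp_all [Matrix.SpecialLinearGroup.smul_def, transvection_coe, add_mulVec, single_mulVec_eq]

theorem transvection_zsmul {i j : ι} (hij : i ≠ j) (m : ℤ) (x : R) :
    transvection hij (m • x) = transvection hij x ^ m := by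
  have hadd (x y : R) : transvection hij (x + y) = transvection hij x * transvection hij y :=
    Subtype.ext (transvection_mul_transvection_same i j hij x y).symm
  exact map_zsmul (AddMonoidHom.mk'
    (fun x : R => Additive.ofMul (SpecialLinearGroup.transvection hij x)) hadd) m x

theorem commutatorElement_transvection_mul_transvection_mul {o p q l : ι} (hpq : p ≠ q)
    (hpl : p ≠ l) (hpo : p ≠ o) (hqo : q ≠ o) (hlq : l ≠ q) (a b c d : R) :
    ⁅transvection hpq a * transvection hpl b, transvection hpo d * transvection hqo c⁆ =
      transvection hpo (a * c) := by
  rw [commutatorElement_def, mul_inv_eq_iff_eq_mul, mul_inv_eq_iff_eq_mul]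
  refine specialLinearGroup_ext_smul fun v => ?_
  simp only [mul_smul, transvection_smul]
  grind

theorem commutatorElement_transvection_transvection {i j l : ι} (hij : i ≠ j) (hjl : j ≠ l)
    (hil : i ≠ l) (x y : R) :
    ⁅transvection hij x, transvection hjl y⁆ = transvection hil (x * y) := by
  simpa using commutatorElement_transvection_mul_transvection_mul hij hil hil hjl hjl.symm x 0 y 0

/-- The relation "`G` contains every elementary matrix at the position `(i, j)`". It holds
vacuously on the diagonal, which makes it reflexive. -/
def HasTransvections (G : Subgroup (SpecialLinearGroup ι R)) (i j : ι) : Prop :=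
  ∀ (hij : i ≠ j) (x : R), transvection hij x ∈ G

instance (G : Subgroup (SpecialLinearGroup ι R)) : Std.Refl (HasTransvections G) where
  refl _ hii := absurd rfl hii

instance (G : Subgroup (SpecialLinearGroup ι R)) : IsTrans ι (HasTransvections G) where
  trans i j l hGij hGjl hil x := by
    rcases eq_or_ne i j with rfl | hij
    · exact hGjl hil x
    rcases eq_or_ne j l with rfl | hjl
    · exact hGij hil x
    rw [← mul_one x, ← commutatorElement_transvection_transvection hij hjl hil]
    exact Subgroup.commutator_le_self G
      (Subgroup.commutator_mem_commutator (hGij hij x) (hGjl hjl 1))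

end Transvections

section ColumnReduction

variable {ι R : Type*} [Fintype ι] [DecidableEq ι]

section CommRing

variable [CommRing R] {G : Subgroup (SpecialLinearGroup ι R)} {S : Finset ι} {c : ι}

/-- The matrices that agree with the identity matrix in the columns indexed by `S`. -/
def basisFixer (S : Finset ι) : Subgroup (SpecialLinearGroup ι R) :=
  fixingSubgroup _ ((fun j => (Pi.single j 1 : ι → R)) '' S)

theorem mem_basisFixer {g : SpecialLinearGroup ι R} :
    g ∈ basisFixer S ↔ ∀ j ∈ S, g • (Pi.single j 1 : ι → R) = Pi.single j 1 := by
  simp [basisFixer, mem_fixingSubgroup_iff]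

theorem HasTransvections.inf_basisFixer {i j : ι} (hG : HasTransvections G i j) (hj : j ∉ S) :
    HasTransvections (G ⊓ basisFixer S) i j := by
  refine fun hij x => ⟨hG hij x, mem_basisFixer.2 fun l hl => ?_⟩
  have hjl : j ≠ l := fun h => hj (h ▸ hl)
  simp [transvection_smul, hjl]

theorem exists_mem_smul_eq_single_one (hG : ∀ i, HasTransvections G i c) {v : ι → R}
    (hv : v c = 1) : ∃ g ∈ G, g • v = Pi.single c 1 := by
  suffices ∀ T : Finset ι, c ∉ T → ∃ g ∈ G, (g • v) c = 1 ∧ ∀ i ∈ T, (g • v) i = 0 by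
    obtain ⟨g, hg, hgc, hgT⟩ := this (Finset.univ.erase c) (Finset.notMem_erase c _)
    refine ⟨g, hg, ?_⟩
    ext i
    rcases eq_or_ne i c with rfl | hi
    · simpa using hgc
    · simpa [hi] using hgT i (by simp [hi])
  intro T hcT
  induction T using Finset.induction_on with
  | empty => exact ⟨1, G.one_mem, by simpa using hv, by simp⟩
  | insert a T _ ih =>
    obtain ⟨g, hg, hgc, hgT⟩ := ih (by grind)
    have hac : a ≠ c := by grind
    refine ⟨transvection hac (-(g • v) a) * g, G.mul_mem (hG a hac _) hg, ?_, ?_⟩ <;>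
      simp only [mul_smul, transvection_smul] <;> grind

theorem isUnit_smul_single_apply {M : SpecialLinearGroup ι R} (hM : M ∈ basisFixer S)
    (hMc : ∀ i, i ≠ c → i ∉ S → (M • (Pi.single c 1 : ι → R)) i = 0) :
    IsUnit ((M • (Pi.single c 1 : ι → R)) c) := by
  have hinv := mem_basisFixer.1 (inv_mem hM)
  refine IsUnit.of_mul_eq_one_right ((M⁻¹ : SpecialLinearGroup ι R) c c) ?_
  calc M⁻¹ c c * (M • (Pi.single c 1 : ι → R)) c = ∑ l, M⁻¹ c l * M l c := by
        rw [smul_single_one_apply]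
        symm
        refine Finset.sum_eq_single_of_mem c (Finset.mem_univ c) fun l _ hl => ?_
        by_cases hlS : l ∈ S
        · rw [← smul_single_one_apply M⁻¹, hinv l hlS, Pi.single_eq_of_ne hl.symm, zero_mul]
        · rw [← smul_single_one_apply M, hMc l hl hlS, mul_zero]
    _ = (M⁻¹ * M) c c := by rw [coe_mul, Matrix.mul_apply]
    _ = 1 := by simp

theorem smul_single_apply_eq_one {M : SpecialLinearGroup ι R}
    (hM : M ∈ basisFixer (Finset.univ.erase c)) : (M • (Pi.single c 1 : ι → R)) c = 1 := by
  have hMcol : (M : Matrix ι ι R) = updateCol 1 c (M • (Pi.single c 1 : ι → R)) := by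
    ext i j
    rcases eq_or_ne j c with rfl | hj
    · rw [updateCol_self, smul_single_one_apply]
    · rw [updateCol_ne hj, ← smul_single_one_apply, mem_basisFixer.1 hM j (by simp [hj]),
        Pi.single_apply, Matrix.one_apply]
  calc (M • (Pi.single c 1 : ι → R)) c = cramer 1 (M • (Pi.single c 1 : ι → R)) c := by
        rw [cramer_one, Module.End.one_apply]
    _ = det (M : Matrix ι ι R) := by rw [cramer_apply, ← hMcol]
    _ = 1 := M.det_coe

end CommRing

variable [EuclideanDomain R] {G : Subgroup (SpecialLinearGroup ι R)} {S : Finset ι} {c : ι}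

theorem exists_mem_smul_apply_eq_zero_or {i j : ι} (hij : i ≠ j)
    (hG : AntisymmRel (HasTransvections G) i j) (v : ι → R) :
    ∃ g ∈ G, ((g • v) i = 0 ∨ (g • v) j = 0) ∧ ∀ l, l ≠ i → l ≠ j → (g • v) l = v l := by
  obtain ⟨a, ha⟩ : ∃ a, v i = a := ⟨_, rfl⟩
  obtain ⟨b, hb⟩ : ∃ b, v j = b := ⟨_, rfl⟩
  induction a, b using EuclideanDomain.GCD.induction generalizing i j v with
  | H0 b => exact ⟨1, G.one_mem, by simp [ha], by simp⟩
  | H1 a b _ ih =>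
    set t := transvection hij.symm (-(b / a)) with ht
    have htj : (t • v) j = b % a := by
      rw [ht, transvection_smul, Function.update_self, ha, hb,
        EuclideanDomain.mod_eq_sub_mul_div]
      ring
    have hti : ∀ l, l ≠ j → (t • v) l = v l := by
      simp +contextual [ht, transvection_smul]
    obtain ⟨g, hg, hzero, hfix⟩ := ih hij.symm hG.symm (t • v) htj ((hti i hij).trans ha)
    refine ⟨g * t, G.mul_mem hg (hG.2 _ _), ?_, fun l hli hlj => ?_⟩
    · simpa only [mul_smul] using hzero.symm
    · rw [mul_smul, hfix l hlj hli, hti l hlj]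

theorem exists_mem_smul_apply_eq_zero {i j : ι} (hij : i ≠ j)
    (hG : AntisymmRel (HasTransvections G) i j) (v : ι → R) :
    ∃ g ∈ G, (g • v) i = 0 ∧ ∀ l, l ≠ i → l ≠ j → (g • v) l = v l := by
  obtain ⟨g, hg, hi | hj, hfix⟩ := exists_mem_smul_apply_eq_zero_or hij hG v
  · exact ⟨g, hg, hi, hfix⟩
  · refine ⟨transvection hij (-1) * (transvection hij.symm 1 * g),
      G.mul_mem (hG.1 _ _) (G.mul_mem (hG.2 _ _) hg), ?_, fun l hli hlj => ?_⟩ <;>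
      simp only [mul_smul, transvection_smul] <;> grind

theorem exists_mem_smul_eq_zero_on (T : Finset ι) (hcT : c ∉ T)
    (hG : ∀ i ∈ T, AntisymmRel (HasTransvections G) i c) (v : ι → R) :
    ∃ g ∈ G, ∀ i ∈ T, (g • v) i = 0 := by
  induction T using Finset.induction_on with
  | empty => exact ⟨1, G.one_mem, by simp⟩
  | insert a T ha ih =>
    obtain ⟨g, hg, hgT⟩ := ih (by grind) fun i hi => hG i (by grind)
    obtain ⟨g', hg', hzero, hfix⟩ :=
      exists_mem_smul_apply_eq_zero (by grind) (hG a (by grind)) (g • v)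
    refine ⟨g' * g, G.mul_mem hg' hg, (Finset.forall_mem_insert ..).2 ⟨?_, fun i hi => ?_⟩⟩
    · rw [mul_smul, hzero]
    · rw [mul_smul, hfix i (by grind) (by grind), hgT i hi]

theorem exists_mem_smul_single_apply_eq_one (hG : ∀ i j, HasTransvections G i j) (hc : c ∉ S)
    {M : SpecialLinearGroup ι R} (hM : M ∈ basisFixer S) :
    ∃ g ∈ G ⊓ basisFixer S, (g • M • (Pi.single c 1 : ι → R)) c = 1 := by
  have hGS : ∀ i j, j ∉ S → HasTransvections (G ⊓ basisFixer S) i j :=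
    fun i j hj => (hG i j).inf_basisFixer hj
  by_cases hlast : ∃ t, t ≠ c ∧ t ∉ S
  · obtain ⟨t, htc, htS⟩ := hlast
    obtain ⟨g, hg, hzero⟩ := exists_mem_smul_eq_zero_on (Finset.univ \ insert c S) (by simp)
      (fun i hi => ⟨hGS i c hc, hGS c i (by grind)⟩) (M • (Pi.single c 1 : ι → R))
    obtain ⟨u, hu⟩ : IsUnit ((g • M • (Pi.single c 1 : ι → R)) c) := by
      rw [← mul_smul]
      refine isUnit_smul_single_apply (mul_mem hg.2 hM) fun i hic hiS => ?_
      rw [mul_smul]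
      exact hzero i (by simp [hic, hiS])
    have hgt := hzero t (by simp [htc, htS])
    -- `(u, 0) ↦ (u, 1) ↦ (1, 1)` in the coordinates `c` and `t`
    refine ⟨transvection htc.symm (1 - u.1) * (transvection htc u⁻¹.1 * g),
      mul_mem (hGS _ _ htS _ _) (mul_mem (hGS _ _ hc _ _) hg), ?_⟩
    simp [mul_smul, transvection_smul, htc.symm, hgt, ← hu]
  · have hS : S = Finset.univ.erase c := by grind
    exact ⟨1, one_mem _, by simpa using smul_single_apply_eq_one (hS ▸ hM)⟩

theorem exists_mul_mem_basisFixer_insert (hG : ∀ i j, HasTransvections G i j) (hc : c ∉ S)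
    {M : SpecialLinearGroup ι R} (hM : M ∈ basisFixer S) :
    ∃ g ∈ G, g * M ∈ basisFixer (insert c S) := by
  obtain ⟨g, hg, hone⟩ := exists_mem_smul_single_apply_eq_one hG hc hM
  obtain ⟨g', hg', hsingle⟩ := exists_mem_smul_eq_single_one
    (fun i => (hG i c).inf_basisFixer hc) hone
  refine ⟨g' * g, mul_mem hg'.1 hg.1, mem_basisFixer.2 ?_⟩
  rw [Finset.forall_mem_insert]
  refine ⟨by rwa [mul_smul, mul_smul], mem_basisFixer.1 ?_⟩
  exact mul_mem (mul_mem hg'.2 hg.2) hM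

theorem eq_top_of_forall_hasTransvections (hG : ∀ i j, HasTransvections G i j) : G = ⊤ := by
  refine G.eq_top_iff'.2 fun M => ?_
  have reduce : ∀ S : Finset ι, ∃ g ∈ G, g * M ∈ basisFixer S := by
    intro S
    induction S using Finset.induction_on with
    | empty => exact ⟨1, G.one_mem, mem_basisFixer.2 (by simp)⟩
    | insert c S hc ih =>
      obtain ⟨g, hg, hgM⟩ := ih
      obtain ⟨g', hg', hg'M⟩ := exists_mul_mem_basisFixer_insert hG hc hgM
      exact ⟨g' * g, G.mul_mem hg' hg, by rwa [mul_assoc]⟩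
  obtain ⟨g, hg, hgM⟩ := reduce Finset.univ
  have hgM_one : g * M = 1 := by
    ext i j
    rw [← smul_single_one_apply, mem_basisFixer.1 hgM j (Finset.mem_univ j)]
    simp [Pi.single_apply, Matrix.one_apply]
  rw [eq_inv_of_mul_eq_one_right hgM_one]
  exact G.inv_mem hg

end ColumnReduction

section Monomial

variable {ι R : Type*} [Fintype ι] [DecidableEq ι] [CommRing R]

section Conjugation

variable {M : SpecialLinearGroup ι R} {σ : Perm ι} {d : ι → Rˣ}

theorem conj_transvection_of_smul_apply (hM : ∀ (v : ι → R) i, (M • v) (σ i) = d i * v i)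
    {i j i' j' : ι} (hi : σ i = i') (hj : σ j = j') (hij : i ≠ j) (hij' : i' ≠ j') (x : R) :
    M * transvection hij x * M⁻¹ = transvection hij' (d i * x * ((d j)⁻¹ : Rˣ)) := by
  subst hi hj
  rw [mul_inv_eq_iff_eq_mul]
  refine specialLinearGroup_ext_smul fun v => funext fun a => ?_
  obtain ⟨l, rfl⟩ := σ.surjective a
  simp only [mul_smul, hM, transvection_smul]
  rcases eq_or_ne l i with rfl | hl
  · simp only [Function.update_self]
    linear_combination -(d l * x * v j) * (d j).inv_mul
  · simp [hl, hM]

theorem commutatorElement_transvection_of_smul_apply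
    (hM : ∀ (v : ι → R) i, (M • v) (σ i) = d i * v i) {i j i' j' : ι} (hi : σ i = i')
    (hj : σ j = j') (hij : i ≠ j) (hij' : i' ≠ j') (x : R) :
    ⁅transvection hij x, M⁆ =
      transvection hij x * transvection hij' (-(d i * x * ((d j)⁻¹ : Rˣ))) := by
  rw [← transvection_inv, ← conj_transvection_of_smul_apply hM hi hj hij,
    commutatorElement_def]
  group

end Conjugation

/-- The diagonal of signs that corrects the determinant of the permutation matrix of `σ`, placed
at the coordinate `z`. -/
def signAt (R : Type*) [CommRing R] (z : ι) (σ : Perm ι) : ι → Rˣ :=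
  Pi.mulSingle z (Units.map (Int.castRingHom R) (Perm.sign σ))

/-- The matrix of determinant one with `e_j ↦ e_{σ j}` for `j ≠ z` and `e_z ↦ sign σ • e_{σ z}`. -/
def signedPerm (z : ι) (σ : Perm ι) : SpecialLinearGroup ι R :=
  ⟨(σ⁻¹).permMatrix R * diagonal fun i => (signAt R z σ i : R), by
    have hprod : ∏ i, (signAt R z σ i : R) = Perm.sign σ := by
      rw [← Units.coe_prod, signAt, Fintype.prod_pi_mulSingle']
      rfl
    rw [det_mul, det_permutation, det_diagonal, hprod, Perm.sign_inv, ← Int.cast_mul,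
      Int.units_coe_mul_self, Int.cast_one]⟩

theorem signedPerm_smul_apply (z : ι) (σ : Perm ι) (v : ι → R) (i : ι) :
    ((signedPerm z σ : SpecialLinearGroup ι R) • v) (σ i) = signAt R z σ i * v i := by
  rw [Matrix.SpecialLinearGroup.smul_def, smul_eq_mulVec, signedPerm, ← mulVec_mulVec,
    permMatrix_mulVec]
  simp [mulVec_diagonal]

theorem signedPerm_mul {z : ι} {σ τ : Perm ι} (hτ : τ z = z) :
    (signedPerm z (σ * τ) : SpecialLinearGroup ι R) = signedPerm z σ * signedPerm z τ := by
  refine specialLinearGroup_ext_smul fun v => funext fun a => ?_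
  obtain ⟨i, rfl⟩ := (σ * τ).surjective a
  rw [signedPerm_smul_apply, mul_smul, Perm.mul_apply, signedPerm_smul_apply,
    signedPerm_smul_apply]
  have hi : τ i = z ↔ i = z := by rw [← τ.injective.eq_iff (a := i), hτ]
  by_cases hiz : i = z
  · simp [signAt, hiz, hτ, mul_assoc]
  · simp [signAt, hi, hiz]

theorem signedPerm_one (z : ι) : (signedPerm z 1 : SpecialLinearGroup ι R) = 1 := by
  refine specialLinearGroup_ext_smul fun v => funext fun i => ?_
  simpa [signAt] using signedPerm_smul_apply z 1 v i

theorem signedPerm_pow {z : ι} {σ : Perm ι} (hσ : σ z = z) (m : ℕ) :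
    (signedPerm z (σ ^ m) : SpecialLinearGroup ι R) = signedPerm z σ ^ m := by
  induction m with
  | zero => rw [pow_zero, pow_zero, signedPerm_one]
  | succ m ih => rw [pow_succ, pow_succ, signedPerm_mul hσ, ih]

theorem signedPerm_eq_one_iff [Nontrivial R] {z : ι} {σ : Perm ι} :
    (signedPerm z σ : SpecialLinearGroup ι R) = 1 ↔ σ = 1 := by
  refine ⟨fun h => Equiv.ext fun i => ?_, fun h => h ▸ signedPerm_one z⟩
  by_contra hne
  have hi := signedPerm_smul_apply z σ (Pi.single i (1 : R)) i
  rw [h, one_smul, Pi.single_eq_of_ne (show σ i ≠ i from hne), Pi.single_eq_same, mul_one] at hi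
  exact (signAt R z σ i).ne_zero hi.symm

theorem orderOf_signedPerm [Nontrivial R] {z : ι} {σ : Perm ι} (hσ : σ z = z) :
    orderOf (signedPerm z σ : SpecialLinearGroup ι R) = orderOf σ :=
  orderOf_eq_orderOf_iff.2 fun m => by rw [← signedPerm_pow hσ, signedPerm_eq_one_iff]

variable {G : Subgroup (SpecialLinearGroup ι R)} {z : ι} {σ : Perm ι} {i j : ι}

theorem HasTransvections.map_perm (hG : HasTransvections G i j) (hσ : signedPerm z σ ∈ G) :
    HasTransvections G (σ i) (σ j) := by
  intro hij x
  have hij' : i ≠ j := fun h => hij (congrArg σ h)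
  have hconj := conj_transvection_of_smul_apply (signedPerm_smul_apply z σ) rfl rfl hij' hij
    (((signAt R z σ i)⁻¹ : Rˣ) * x * signAt R z σ j)
  simp only [mul_assoc, Units.mul_inv, mul_one, Units.mul_inv_cancel_left] at hconj
  rw [← hconj]
  exact G.mul_mem hσ (G.mul_mem (hG hij' _) (G.inv_mem hσ))

theorem HasTransvections.symm_of_perm (hG : HasTransvections G (σ i) i)
    (hσ : signedPerm z σ ∈ G) : HasTransvections G i (σ i) := by
  -- Transvections lead from each point of the `σ`-orbit of `i` back to `i`, also from `σ⁻¹ i`.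
  have horbit (m : ℕ) : HasTransvections G ((σ ^ m) i) i := by
    induction m with
    | zero => exact refl_of (HasTransvections G) i
    | succ m ih =>
      rw [pow_succ', Perm.mul_apply]
      exact _root_.trans (ih.map_perm hσ) hG
  obtain ⟨m, hm⟩ : σ⁻¹ ∈ Submonoid.powers σ :=
    mem_powers_iff_mem_zpowers.2 (inv_mem (Subgroup.mem_zpowers σ))
  have hinv : σ ((σ ^ m) i) = i := by
    rw [show σ ^ m = σ⁻¹ from hm]
    exact σ.apply_symm_apply i
  simpa only [hinv] using (horbit m).map_perm hσ

theorem HasTransvections.antisymmRel_map_perm (hij : AntisymmRel (HasTransvections G) i j)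
    (hσ : signedPerm z σ ∈ G) : AntisymmRel (HasTransvections G) (σ i) (σ j) :=
  ⟨hij.1.map_perm hσ, hij.2.map_perm hσ⟩

end Monomial

section Generation

variable {ι : Type*} [Fintype ι] [DecidableEq ι] {G : Subgroup (SpecialLinearGroup ι ℤ)}

theorem hasTransvections_of_unit {i j : ι} {hij : i ≠ j} {u : ℤˣ}
    (hu : transvection hij (u : ℤ) ∈ G) : HasTransvections G i j := by
  intro _ x
  have hx : x = (x * u) • (u : ℤ) := by
    rw [smul_eq_mul, mul_assoc, Int.units_coe_mul_self, mul_one]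
  rw [hx, transvection_zsmul]
  exact G.zpow_mem hu _

variable {α β γ : Perm ι} {o y z : ι}

theorem hasTransvections_of_conj_mem (ho : o ≠ α o) (hβo : β o = o) (hβα : β (α o) = α (α o))
    (hA : signedPerm y α ∈ G) (hB : signedPerm z β ∈ G)
    (hT : transvection ho 1 * signedPerm z β * (transvection ho 1)⁻¹ ∈ G)
    (hU : transvection ho.symm 1 * signedPerm z β * (transvection ho.symm 1)⁻¹ ∈ G) :
    HasTransvections G (α o) o := by
  have h₀₂ : o ≠ α (α o) := by simpa only [hβo, hβα] using β.injective.ne ho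
  have h₁₂ : α o ≠ α (α o) := α.injective.ne ho
  have h₁₃ : α o ≠ α (α (α o)) := α.injective.ne h₀₂
  have h₃₂ : α (α (α o)) ≠ α (α o) := (α.injective.ne h₁₂).symm
  have commutator_mem {t : SpecialLinearGroup ι ℤ} (ht : t * signedPerm z β * t⁻¹ ∈ G) :
      ⁅t, signedPerm z β⁆ ∈ G := G.mul_mem ht (G.inv_mem hB)
  have hrow := G.mul_mem (G.mul_mem hA (commutator_mem hT)) (G.inv_mem hA)
  rw [commutatorElement_transvection_of_smul_apply (signedPerm_smul_apply z β) hβo hβα ho h₀₂,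
    ← MulAut.conj_apply, map_mul, MulAut.conj_apply, MulAut.conj_apply,
    conj_transvection_of_smul_apply (signedPerm_smul_apply y α) rfl rfl ho h₁₂,
    conj_transvection_of_smul_apply (signedPerm_smul_apply y α) rfl rfl h₀₂ h₁₃] at hrow
  have hcolumn := commutator_mem hU
  rw [commutatorElement_transvection_of_smul_apply (signedPerm_smul_apply z β) hβα hβo ho.symm
    h₀₂.symm] at hcolumn
  -- A row matrix and a column matrix overlap only in the index `α (α o)`, so a single elementary
  -- matrix remains.
  have hcomm := Subgroup.commutator_le_self G (Subgroup.commutator_mem_commutator hrow hcolumn)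
  rw [commutatorElement_transvection_mul_transvection_mul h₁₂ h₁₃ ho.symm h₀₂.symm h₃₂] at hcomm
  exact hasTransvections_of_unit (u := signAt ℤ y α o * 1 * (signAt ℤ y α (α o))⁻¹ *
    -(signAt ℤ z β (α o) * 1 * (signAt ℤ z β o)⁻¹)) (by simpa using hcomm)

theorem closure_signedPerm_eq_top (ho : o ≠ α o) (hβo : β o = o) (hγo : γ o = o)
    (hβα : β (α o) = α (α o))
    (hcover : ∀ S : Set ι, o ∈ S → (∀ i ∈ S, α i ∈ S ∧ β i ∈ S ∧ γ i ∈ S) → S = Set.univ) :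
    Subgroup.closure {signedPerm y α, signedPerm z β, signedPerm z γ,
      transvection ho 1 * signedPerm z β * (transvection ho 1)⁻¹,
      transvection ho.symm 1 * signedPerm z β * (transvection ho.symm 1)⁻¹} =
      (⊤ : Subgroup (SpecialLinearGroup ι ℤ)) := by
  set G : Subgroup (SpecialLinearGroup ι ℤ) := Subgroup.closure _
  have hA : signedPerm y α ∈ G := Subgroup.subset_closure (by simp)
  have hB : signedPerm z β ∈ G := Subgroup.subset_closure (by simp)
  have hC : signedPerm z γ ∈ G := Subgroup.subset_closure (by simp)
  have hback : HasTransvections G (α o) o :=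
    hasTransvections_of_conj_mem ho hβo hβα hA hB (Subgroup.subset_closure (by simp))
      (Subgroup.subset_closure (by simp))
  have hlink : AntisymmRel (HasTransvections G) o (α o) := ⟨hback.symm_of_perm hA, hback⟩
  have hclass : {i | AntisymmRel (HasTransvections G) o i} = Set.univ :=
    hcover _ (.refl _ o) fun i hi => ⟨hlink.trans (HasTransvections.antisymmRel_map_perm hi hA),
      hβo ▸ HasTransvections.antisymmRel_map_perm hi hB,
      hγo ▸ HasTransvections.antisymmRel_map_perm hi hC⟩
  have hlinked (i : ι) : AntisymmRel (HasTransvections G) o i := Set.eq_univ_iff_forall.1 hclass i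
  exact eq_top_of_forall_hasTransvections fun i j => _root_.trans (hlinked i).2 (hlinked j).1

theorem exists_generators_of_perms {k : ℕ} (ho : o ≠ α o) (hαy : α y = y) (hβo : β o = o)
    (hγo : γ o = o) (hβα : β (α o) = α (α o)) (hαk : orderOf α = k) (hβk : orderOf β = k)
    (hγk : orderOf γ = k)
    (hcover : ∀ S : Set ι, o ∈ S → (∀ i ∈ S, α i ∈ S ∧ β i ∈ S ∧ γ i ∈ S) → S = Set.univ) :
    ∃ M₁ M₂ M₃ M₄ M₅ : SpecialLinearGroup ι ℤ,
      orderOf M₁ = k ∧ orderOf M₂ = k ∧ orderOf M₃ = k ∧ orderOf M₄ = k ∧ orderOf M₅ = k ∧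
      Subgroup.closure {M₁, M₂, M₃, M₄, M₅} = ⊤ := by
  have hB : orderOf (signedPerm o β : SpecialLinearGroup ι ℤ) = k :=
    (orderOf_signedPerm hβo).trans hβk
  have hconj (t : SpecialLinearGroup ι ℤ) : orderOf (t * signedPerm o β * t⁻¹) = k :=
    ((MulAut.conj t).orderOf_eq _).trans hB
  exact ⟨_, _, _, _, _, (orderOf_signedPerm hαy).trans hαk, hB,
    (orderOf_signedPerm hγo).trans hγk, hconj _, hconj _,
    closure_signedPerm_eq_top ho hβo hγo hβα hcover⟩

end Generation

section BlockRotation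

variable {s m k n : ℕ}

/-- The `m` consecutive blocks of length `k` that tile the interval from `s` to `s + m * k`;
the second component is the position inside the block. -/
def blockEmbedding (h : s + m * k ≤ n) : (Σ _ : Fin m, Fin k) ↪ Fin n :=
  ((sigmaEquivProd (Fin m) (Fin k)).trans finProdFinEquiv).toEmbedding.trans
    ((Fin.natAddEmb s).trans (Fin.castLEEmb h))

theorem coe_blockEmbedding (h : s + m * k ≤ n) (x : Σ _ : Fin m, Fin k) :
    (blockEmbedding h x : ℕ) = s + (x.2 + k * x.1) :=
  rfl

/-- The permutation that rotates each of the `m` blocks of length `k` starting at `s`. -/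
noncomputable def blockRotation (h : s + m * k ≤ n) : Perm (Fin n) :=
  Perm.viaEmbeddingHom (blockEmbedding h) (Perm.sigmaCongrRightHom _ fun _ => finRotate k)

theorem orderOf_blockRotation (h : s + m * k ≤ n) (hk : 2 ≤ k) (hm : 0 < m) :
    orderOf (blockRotation h) = k := by
  have hdiag : Function.Injective
      (MonoidHom.pi fun _ : Fin m => MonoidHom.id (Perm (Fin k))) :=
    fun _ _ hστ => congrFun hστ ⟨0, hm⟩
  rw [blockRotation, orderOf_injective _ (Perm.viaEmbeddingHom_injective _),
    orderOf_injective _ Perm.sigmaCongrRightHom_injective]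
  refine (orderOf_injective _ hdiag (finRotate k)).trans ?_
  rw [(isCycle_finRotate_of_le hk).orderOf, support_finRotate_of_le hk, Finset.card_univ,
    Fintype.card_fin]

theorem blockRotation_apply_of_eq (h : s + m * k ≤ n) {i j : Fin n} {q t : ℕ} (hq : q < m)
    (ht : t + 1 < k) (hi : (i : ℕ) = s + (t + k * q)) (hj : (j : ℕ) = i + 1) :
    blockRotation h i = j := by
  obtain ⟨k, rfl⟩ : ∃ l, k = l + 1 := ⟨k - 1, by lia⟩
  have hi' : i = blockEmbedding h ⟨⟨q, hq⟩, ⟨t, by lia⟩⟩ := Fin.ext hi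
  have hj' : j = blockEmbedding h ⟨⟨q, hq⟩, ⟨t + 1, ht⟩⟩ :=
    Fin.ext (by rw [coe_blockEmbedding]; lia)
  rw [hi', hj', blockRotation, Perm.viaEmbeddingHom_apply, Perm.viaEmbedding_apply]
  exact congrArg (fun a => blockEmbedding h ⟨⟨q, hq⟩, a⟩) (finRotate_of_lt (by lia))

theorem blockRotation_apply_of_notMem (h : s + m * k ≤ n) {i : Fin n}
    (hi : (i : ℕ) < s ∨ s + m * k ≤ i) : blockRotation h i = i := by
  refine Perm.viaEmbedding_apply_of_notMem _ _ i ?_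
  rintro ⟨⟨q, t⟩, rfl⟩
  have hlt := (finProdFinEquiv (q, t)).isLt
  rw [finProdFinEquiv_apply_val] at hlt
  rw [coe_blockEmbedding] at hi
  lia

theorem blockRotation_apply_eq_or {r : ℕ} (hk : 2 ≤ k) (hr : r < k) (hm : 0 < m)
    (hα : 0 + m * k ≤ n) (hβ : 1 + m * k ≤ n) (hγ : r + 1 + m * k ≤ n)
    {i j : Fin n} (hj : (j : ℕ) = i + 1) (hjn : (j : ℕ) ≤ m * k + r) :
    blockRotation hα i = j ∨ blockRotation hβ i = j ∨ blockRotation hγ i = j := by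
  have hmod := Nat.mod_add_div (i : ℕ) k
  have hlt := Nat.mod_lt (i : ℕ) (by lia : 0 < k)
  rcases lt_or_ge (i : ℕ) (m * k) with him | him
  · have hq : i / k < m := Nat.div_lt_of_lt_mul (by lia)
    by_cases ht : (i : ℕ) % k + 1 < k
    · exact .inl (blockRotation_apply_of_eq hα hq ht (by lia) hj)
    · exact .inr (.inl (blockRotation_apply_of_eq hβ hq (t := k - 2) (by lia) (by lia) hj))
  · have hlast : k * (m - 1) + k = m * k := by
      rw [← Nat.mul_succ, Nat.succ_eq_add_one, Nat.sub_add_cancel hm, mul_comm]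
    exact .inr (.inr (blockRotation_apply_of_eq hγ (q := m - 1) (t := i - m * k + k - r - 1)
      (by lia) (by lia) (by lia) hj))

theorem eq_univ_of_blockRotation_mem {r : ℕ} (hk : 2 ≤ k) (hr : r < k) (hm : 0 < m)
    (hα : 0 + m * k ≤ m * k + r + 1) (hβ : 1 + m * k ≤ m * k + r + 1)
    (hγ : r + 1 + m * k ≤ m * k + r + 1) {S : Set (Fin (m * k + r + 1))} (hzero : 0 ∈ S)
    (hS : ∀ i ∈ S, blockRotation hα i ∈ S ∧ blockRotation hβ i ∈ S ∧ blockRotation hγ i ∈ S) :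
    S = Set.univ := by
  refine Set.eq_univ_of_forall fun ⟨i, hi⟩ => ?_
  induction i with
  | zero => exact hzero
  | succ i ih =>
    obtain ⟨hiα, hiβ, hiγ⟩ := hS _ (ih (by lia))
    rcases blockRotation_apply_eq_or hk hr hm hα hβ hγ (i := ⟨i, by lia⟩) (j := ⟨i + 1, hi⟩)
      rfl (by lia) with h | h | h
    · exact h ▸ hiα
    · exact h ▸ hiβ
    · exact h ▸ hiγ

end BlockRotation

theorem SL_n_Z_generated_by_eight_elements_of_order_k_general (k n : ℕ) (hk : 3 ≤ k)
    (hkn : k < n) :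
    ∃ M₁ M₂ M₃ M₄ M₅ : SpecialLinearGroup (Fin n) ℤ,
      orderOf M₁ = k ∧ orderOf M₂ = k ∧ orderOf M₃ = k ∧ orderOf M₄ = k ∧ orderOf M₅ = k ∧
      Subgroup.closure {M₁, M₂, M₃, M₄, M₅} = ⊤ := by
  obtain ⟨m, r, hm, hr, rfl⟩ : ∃ m r, 0 < m ∧ r < k ∧ n = m * k + r + 1 :=
    ⟨(n - 1) / k, (n - 1) % k, Nat.div_pos (by lia) (by lia), Nat.mod_lt _ (by lia),
      by rw [Nat.div_add_mod', Nat.sub_add_cancel (by lia)]⟩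
  have : k ≤ m * k := Nat.le_mul_of_pos_left k hm
  have hα : 0 + m * k ≤ m * k + r + 1 := by lia
  have hβ : 1 + m * k ≤ m * k + r + 1 := by lia
  have hγ : r + 1 + m * k ≤ m * k + r + 1 := by lia
  have hα_zero : blockRotation hα 0 = ⟨1, by lia⟩ :=
    blockRotation_apply_of_eq hα hm (t := 0) (by lia) rfl rfl
  have hα_one : blockRotation hα ⟨1, by lia⟩ = ⟨2, by lia⟩ :=
    blockRotation_apply_of_eq hα hm (t := 1) (by lia) rfl rfl
  have hβ_one : blockRotation hβ ⟨1, by lia⟩ = ⟨2, by lia⟩ :=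
    blockRotation_apply_of_eq hβ hm (t := 0) (by lia) rfl rfl
  refine exists_generators_of_perms (o := 0) (y := Fin.last _) (α := blockRotation hα)
    (β := blockRotation hβ) (γ := blockRotation hγ) ?_
    (blockRotation_apply_of_notMem hα (.inr (by rw [Fin.val_last]; lia)))
    (blockRotation_apply_of_notMem hβ (.inl Nat.one_pos))
    (blockRotation_apply_of_notMem hγ (.inl r.succ_pos)) (by rw [hα_zero, hα_one, hβ_one])
    (orderOf_blockRotation hα (by lia) hm) (orderOf_blockRotation hβ (by lia) hm)
    (orderOf_blockRotation hγ (by lia) hm)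
    fun S => eq_univ_of_blockRotation_mem (by lia) hr hm hα hβ hγ
  rw [hα_zero]
  exact Fin.ne_of_val_ne Nat.zero_ne_one

/-- For `k ≥ 5` and `n ≥ 2(k - 1)`, the group `SL(n, ℤ)` is generated by eight
elements of order exactly `k`. -/
theorem SL_n_Z_generated_by_eight_elements_of_order_k
    (k n : ℕ) (hk : 5 ≤ k) (hn : 2 * (k - 1) ≤ n) :
    ∃ M₁ M₂ M₃ M₄ M₅ M₆ M₇ M₈ : Matrix.SpecialLinearGroup (Fin n) ℤ,
      orderOf M₁ = k ∧ orderOf M₂ = k ∧ orderOf M₃ = k ∧ orderOf M₄ = k ∧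
      orderOf M₅ = k ∧ orderOf M₆ = k ∧ orderOf M₇ = k ∧ orderOf M₈ = k ∧
      Subgroup.closure {M₁, M₂, M₃, M₄, M₅, M₆, M₇, M₈} = ⊤ := by
  obtain ⟨M₁, M₂, M₃, M₄, M₅, h₁, h₂, h₃, h₄, h₅, hgen⟩ :=
    SL_n_Z_generated_by_eight_elements_of_order_k_general k n (by lia) (by lia)
  exact ⟨M₁, M₂, M₃, M₄, M₅, M₅, M₅, M₅, h₁, h₂, h₃, h₄, h₅, h₅, h₅, h₅, by simpa using hgen⟩
end
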